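/- arXiv:2103.09596 — 7 statements merged into one kernel-verified Lean document; each statement's English description precedes it below -/
import Mathlib

section
/- (Proposition 1, waiting-time part.) For every rate μ > 0, every integer k ≥ 1 and every t ≥ 0, the function g_k(t) := ∫₀ᵗ Σ_{ℓ=0}^{k−1} (k−ℓ−1)·e^{-μs}(μs)^ℓ/ℓ! ds satisfies g_k(t) = (k−1)·t·F_{μt}(k−1) − (μt²/2)·F_{μt}(k−2) + (k(k−1)/(2μ))·(1 − F_{μt}(k)). -/
/-!
By the fundamental theorem of calculus it suffices that the right-hand side vanishes at `t = 0`
and has the integrand as its derivative. Write `x = μ t`, `p_m = e^{-x} x^m / m!` and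
`F = F_x`. The mass function satisfies `x p_{m-1} = m p_m`, and the distribution function satisfies
`dF(m)/dx = -p_m` (`hasDerivAt_poissonSum`). Hence the derivative of the right-hand side is
`(k-1) F(k-1) - x F(k-2)` plus the boundary terms
`-(k-1) x p_{k-1} + (x²/2) p_{k-2} + (k(k-1)/2) p_k`, which cancel. The integrand equals the same
`(k-1) F(k-1) - x F(k-2)`, because `∑ m p_m = x ∑ p_{m-1}` (`sum_weighted_poisson`).
-/

/-- The cumulative distribution function of a Poisson random variable with mean `lam`,
evaluated at an integer `j`, with the convention that it vanishes for `j < 0`. -/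
noncomputable def poissonCDF (lam : ℝ) (j : ℤ) : ℝ :=
  if j < 0 then 0
  else ∑ m ∈ Finset.range (j.toNat + 1), Real.exp (-lam) * lam ^ m / (Nat.factorial m)

/-- The partial sum of the first `n` Poisson weights, that is, the distribution function at
`n - 1`; the empty sum `n = 0` covers the convention at `-1`. -/
noncomputable def poissonSum (n : ℕ) (x : ℝ) : ℝ :=
  ∑ m ∈ Finset.range n, Real.exp (-x) * x ^ m / (Nat.factorial m)

lemma poissonCDF_eq_poissonSum (x : ℝ) (n : ℕ) (j : ℤ) (hj : j = (n : ℤ) - 1) :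
    poissonCDF x j = poissonSum n x := by
  subst hj
  unfold poissonCDF poissonSum
  rcases n with _ | n
  · simp
  · have h : ((n + 1 : ℕ) : ℤ) - 1 = (n : ℤ) := by push_cast; ring
    rw [h, if_neg (by omega), Int.toNat_natCast]

/-- The sum telescopes under differentiation. The derivative `-p_{n-1}` is written as
`-n e^{-x} x^{n-1} / n!`, which is also correct (zero) for `n = 0`. -/
lemma hasDerivAt_poissonSum (n : ℕ) (x : ℝ) :
    HasDerivAt (poissonSum n) (-(n * Real.exp (-x) * x ^ (n - 1) / (Nat.factorial n))) x := by
  induction n with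
  | zero =>
    have h : poissonSum 0 = fun _ => (0 : ℝ) := by funext y; simp [poissonSum]
    rw [h]
    simpa using hasDerivAt_const x (0 : ℝ)
  | succ n ih =>
    have h : poissonSum (n + 1) =
        fun y => poissonSum n y + Real.exp (-y) * y ^ n / (Nat.factorial n) := by
      funext y; simp [poissonSum, Finset.sum_range_succ]
    rw [h]
    have he : HasDerivAt (fun y : ℝ => Real.exp (-y)) (Real.exp (-x) * (-1)) x :=
      (hasDerivAt_neg x).exp
    have hp := ih.fun_add ((he.fun_mul (hasDerivAt_pow n x)).div_const (Nat.factorial n : ℝ))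
    refine hp.congr_deriv ?_
    have hf : (Nat.factorial n : ℝ) ≠ 0 := by positivity
    rw [Nat.factorial_succ, Nat.add_sub_cancel]
    push_cast
    field_simp
    ring

lemma sum_weighted_poisson (n : ℕ) (c x : ℝ) :
    ∑ l ∈ Finset.range (n + 1), (c - l) * (Real.exp (-x) * x ^ l / (Nat.factorial l)) =
      c * poissonSum (n + 1) x - x * poissonSum n x := by
  have h : ∑ l ∈ Finset.range (n + 1), (l : ℝ) * (Real.exp (-x) * x ^ l / (Nat.factorial l)) =
      x * poissonSum n x := by
    rw [Finset.sum_range_succ', poissonSum, Finset.mul_sum]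
    simp only [Nat.cast_zero, zero_mul, add_zero]
    refine Finset.sum_congr rfl fun l _ => ?_
    have hf : (Nat.factorial l : ℝ) ≠ 0 := by positivity
    rw [Nat.factorial_succ]
    push_cast
    field_simp
    ring
  rw [← h, poissonSum, Finset.mul_sum, ← Finset.sum_sub_distrib]
  exact Finset.sum_congr rfl fun l _ => by ring

lemma poissonSum_succ_zero (n : ℕ) : poissonSum (n + 1) 0 = 1 := by
  simp [poissonSum, Finset.sum_range_succ']

/-- The closed form, with `k = n + 1`, is an antiderivative of the integrand. -/
lemma hasDerivAt_closedForm (μ : ℝ) (hμ : 0 < μ) (n : ℕ) (s : ℝ) :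
    HasDerivAt (fun s => (n : ℝ) * s * poissonSum (n + 1) (μ * s) -
        (μ * s ^ 2 / 2) * poissonSum n (μ * s) +
          (((n : ℝ) + 1) * n / (2 * μ)) * (1 - poissonSum (n + 2) (μ * s)))
      (n * poissonSum (n + 1) (μ * s) - (μ * s) * poissonSum n (μ * s)) s := by
  have hlin : HasDerivAt (fun s : ℝ => μ * s) μ s := by
    simpa using (hasDerivAt_id s).const_mul μ
  have hS (m : ℕ) := (hasDerivAt_poissonSum m (μ * s)).comp s hlin
  simp only [Function.comp_def] at hS
  have h1 := ((hasDerivAt_id' s).const_mul (n : ℝ)).fun_mul (hS (n + 1))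
  have h2 := (((hasDerivAt_pow 2 s).const_mul μ).div_const 2).fun_mul (hS n)
  have h3 := ((hS (n + 2)).const_sub 1).const_mul (((n : ℝ) + 1) * n / (2 * μ))
  refine ((h1.fun_sub h2).fun_add h3).congr_deriv ?_
  rcases n with _ | n
  · simp [poissonSum]
  · have hf : (Nat.factorial n : ℝ) ≠ 0 := by positivity
    have e1 : n + 1 + 1 - 1 = n + 1 := rfl
    have e2 : n + 1 + 2 - 1 = n + 2 := rfl
    have e3 : n + 1 - 1 = n := rfl
    rw [e1, e2, e3]
    simp only [Nat.factorial_succ]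
    push_cast
    field_simp
    ring

/-- Proposition 1, waiting-time part. -/
theorem waiting_time_closed_form (μ : ℝ) (hμ : 0 < μ) (k : ℕ) (hk : 1 ≤ k)
    (t : ℝ) (ht : 0 ≤ t) :
    (∫ s in (0:ℝ)..t,
        ∑ ℓ ∈ Finset.range k,
          ((k : ℝ) - ℓ - 1) * (Real.exp (-(μ * s)) * (μ * s) ^ ℓ / (Nat.factorial ℓ))) =
      ((k : ℝ) - 1) * t * poissonCDF (μ * t) ((k : ℤ) - 1) -
        (μ * t ^ 2 / 2) * poissonCDF (μ * t) ((k : ℤ) - 2) +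
          ((k : ℝ) * ((k : ℝ) - 1) / (2 * μ)) * (1 - poissonCDF (μ * t) (k : ℤ)) := by
  obtain ⟨n, rfl⟩ : ∃ n, k = n + 1 := ⟨k - 1, by omega⟩
  rw [poissonCDF_eq_poissonSum _ (n + 1) _ rfl,
    poissonCDF_eq_poissonSum _ n _ (by push_cast; ring),
    poissonCDF_eq_poissonSum _ (n + 2) _ (by push_cast; ring)]
  have hint : ∀ s : ℝ, HasDerivAt (fun s => (n : ℝ) * s * poissonSum (n + 1) (μ * s) -
        (μ * s ^ 2 / 2) * poissonSum n (μ * s) +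
          (((n : ℝ) + 1) * n / (2 * μ)) * (1 - poissonSum (n + 2) (μ * s)))
      (∑ l ∈ Finset.range (n + 1), (((n + 1 : ℕ) : ℝ) - l - 1) *
        (Real.exp (-(μ * s)) * (μ * s) ^ l / (Nat.factorial l))) s := by
    intro s
    convert hasDerivAt_closedForm μ hμ n s using 1
    rw [← sum_weighted_poisson]
    refine Finset.sum_congr rfl fun l _ => ?_
    push_cast
    ring
  rw [intervalIntegral.integral_eq_sub_of_hasDerivAt (fun s _ => hint s)
    (Continuous.intervalIntegrable (by fun_prop) _ _)]
  simp only [mul_zero, poissonSum_succ_zero]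
  push_cast
  ring
end

section
/- (Integrated CDF of a heterogeneous exponential sum.) Let μ_1,…,μ_n be pairwise distinct positive reals, let φ_n be the density of the sum of n independent exponentials with these rates (defined by φ_1(s) := μ_1 e^{-μ_1 s} and φ_{ℓ+1}(s) := ∫₀ˢ φ_ℓ(u) μ_{ℓ+1} e^{-μ_{ℓ+1}(s−u)} du), and set c_j := μ_j ∏_{i≠j} μ_i/(μ_i − μ_j). Then for every t ≥ 0, ∫₀ᵗ (∫₀ˢ φ_n(u) du) ds = t − Σ_{j=1}^n (c_j/μ_j) · ψ_j(t), where ψ_j(t) := (1 − e^{-μ_j t})/μ_j. -/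
/-!
Write `A_j = ∏_{i ≠ j} μ_i / (μ_i - μ_j)`. This is the value at `0` of the `j`-th Lagrange basis
polynomial for the nodes `μ_1, …, μ_m`, so interpolating a polynomial `p` of degree below `m`
gives `∑ p(μ_j) A_j = p(0)`; in particular `∑ A_j = 1`, and `∑ μ_j A_j = 0` as soon as there are
two nodes.

By induction on `m`, `φ_m(s) = ∑ μ_j A_j e^{-μ_j s}` on `s ≥ 0` (`density_formula`): convolving
`e^{-μ_j s}` with the next exponential density multiplies `A_j` by `μ_{m+1} / (μ_{m+1} - μ_j)`, as
it should, and the coefficient collected by `e^{-μ_{m+1} s}` is the right one because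
`∑ μ_j A_j = 0` for the `m + 1` nodes. Integrating the mixture twice and using `∑ A_j = 1` gives
the result.
-/

/-- The value at `0` of the Lagrange basis polynomial at node `v j`, for the nodes `v i`, `i ∈ s`;
these are the mixture weights of the hypoexponential distribution with rates `v i`. -/
noncomputable def lagrangeWeight (s : Finset ℕ) (v : ℕ → ℝ) (j : ℕ) : ℝ :=
  ∏ i ∈ s.erase j, v i / (v i - v j)

lemma eval_zero_basis (s : Finset ℕ) (v : ℕ → ℝ) (j : ℕ) :
    (Lagrange.basis s v j).eval 0 = lagrangeWeight s v j := by
  unfold Lagrange.basis lagrangeWeight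
  rw [Polynomial.eval_prod]
  refine Finset.prod_congr rfl fun i _ => ?_
  simp only [Lagrange.basisDivisor, Polynomial.eval_mul, Polynomial.eval_C, Polynomial.eval_sub,
    Polynomial.eval_X]
  rw [← neg_sub (v i) (v j), inv_neg]
  ring

lemma sum_eval_mul_lagrangeWeight (s : Finset ℕ) (v : ℕ → ℝ) (hv : Set.InjOn v s)
    (p : Polynomial ℝ) (hp : p.degree < s.card) :
    ∑ j ∈ s, p.eval (v j) * lagrangeWeight s v j = p.eval 0 := by
  conv_rhs => rw [Lagrange.eq_interpolate hv hp]
  simp [Lagrange.interpolate_apply, Polynomial.eval_finsetSum, eval_zero_basis]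

lemma sum_lagrangeWeight (s : Finset ℕ) (v : ℕ → ℝ) (hv : Set.InjOn v s) (hs : s.Nonempty) :
    ∑ j ∈ s, lagrangeWeight s v j = 1 := by
  simpa using sum_eval_mul_lagrangeWeight s v hv 1 (by simpa using hs)

lemma sum_mul_lagrangeWeight (s : Finset ℕ) (v : ℕ → ℝ) (hv : Set.InjOn v s) (hs : 1 < s.card) :
    ∑ j ∈ s, v j * lagrangeWeight s v j = 0 := by
  simpa using sum_eval_mul_lagrangeWeight s v hv Polynomial.X
    (by rw [Polynomial.degree_X]; exact_mod_cast hs)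

lemma lagrangeWeight_succ (m j : ℕ) (v : ℕ → ℝ) (hj : j ∈ Finset.Icc 1 m) :
    lagrangeWeight (Finset.Icc 1 (m + 1)) v j =
      lagrangeWeight (Finset.Icc 1 m) v j * (v (m + 1) / (v (m + 1) - v j)) := by
  have hj' := Finset.mem_Icc.mp hj
  have h : (Finset.Icc 1 (m + 1)).erase j = insert (m + 1) ((Finset.Icc 1 m).erase j) := by
    ext i
    simp only [Finset.mem_erase, Finset.mem_Icc, Finset.mem_insert]
    omega
  unfold lagrangeWeight
  rw [h, Finset.prod_insert (by simp), mul_comm]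

lemma integral_exp_neg_mul (a s : ℝ) (ha : a ≠ 0) :
    ∫ u in (0:ℝ)..s, Real.exp (-(a * u)) = (1 - Real.exp (-(a * s))) / a := by
  have h : ∀ u ∈ Set.uIcc 0 s,
      HasDerivAt (fun u => -(Real.exp (-(a * u)) / a)) (Real.exp (-(a * u))) u := by
    intro u _
    have := ((((hasDerivAt_id u).const_mul a).neg.exp).div_const a).neg
    refine this.congr_deriv ?_
    simp only [id, Pi.neg_apply]
    field_simp
  rw [intervalIntegral.integral_eq_sub_of_hasDerivAt h
    ((by fun_prop : Continuous _).intervalIntegrable _ _)]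
  simp
  ring

lemma integral_exp_convolution (a b s : ℝ) (hab : b - a ≠ 0) :
    ∫ u in (0:ℝ)..s, Real.exp (-(a * u)) * Real.exp (-(b * (s - u))) =
      (Real.exp (-(a * s)) - Real.exp (-(b * s))) / (b - a) := by
  have h : ∀ u : ℝ, Real.exp (-(a * u)) * Real.exp (-(b * (s - u))) =
      Real.exp (-(b * s)) * Real.exp (-((a - b) * u)) := by
    intro u
    rw [← Real.exp_add, ← Real.exp_add]
    ring_nf
  have hba : a - b ≠ 0 := fun h => hab (by linarith)
  have he : Real.exp (-(a * s)) = Real.exp (-(b * s)) * Real.exp (-((a - b) * s)) := by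
    rw [← Real.exp_add]
    ring_nf
  simp_rw [h]
  rw [intervalIntegral.integral_const_mul, integral_exp_neg_mul _ _ hba, he]
  field_simp
  ring

/-- The density of a hypoexponential law is a signed mixture of exponential densities. -/
lemma density_formula (n : ℕ) (μ : ℕ → ℝ) (hinj : Set.InjOn μ (Finset.Icc 1 n : Finset ℕ))
    (φ : ℕ → ℝ → ℝ)
    (hφ1 : ∀ s : ℝ, 0 ≤ s → φ 1 s = μ 1 * Real.exp (-(μ 1 * s)))
    (hφ : ∀ ℓ, 1 ≤ ℓ → ∀ s : ℝ, 0 ≤ s →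
      φ (ℓ + 1) s =
        ∫ u in (0:ℝ)..s, φ ℓ u * (μ (ℓ + 1) * Real.exp (-(μ (ℓ + 1) * (s - u)))))
    (m : ℕ) (hm : 1 ≤ m) (hmn : m ≤ n) (s : ℝ) (hs : 0 ≤ s) :
    φ m s = ∑ j ∈ Finset.Icc 1 m,
      μ j * lagrangeWeight (Finset.Icc 1 m) μ j * Real.exp (-(μ j * s)) := by
  induction m, hm using Nat.le_induction generalizing s with
  | base => simp [hφ1 s hs, lagrangeWeight]
  | succ m hm ih =>
    have hne : ∀ j ∈ Finset.Icc 1 m, μ (m + 1) - μ j ≠ 0 := by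
      intro j hj h
      have hj' := Finset.mem_Icc.mp hj
      have := hinj (Finset.mem_coe.2 (Finset.mem_Icc.2 ⟨by omega, hmn⟩))
        (Finset.mem_coe.2 (Finset.mem_Icc.2 ⟨hj'.1, by omega⟩)) (sub_eq_zero.mp h)
      omega
    have hzero := sum_mul_lagrangeWeight (Finset.Icc 1 (m + 1)) μ
      (hinj.mono (by exact_mod_cast Finset.Icc_subset_Icc_right hmn)) (by simp; omega)
    rw [Finset.sum_Icc_succ_top (by omega)] at hzero ⊢
    -- The weight of the new node is determined by the vanishing of the first moment.
    rw [eq_neg_of_add_eq_zero_right hzero, neg_mul, ← sub_eq_add_neg, Finset.sum_mul,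
      ← Finset.sum_sub_distrib, hφ m hm s hs]
    have hint : ∀ u ∈ Set.uIcc 0 s,
        φ m u * (μ (m + 1) * Real.exp (-(μ (m + 1) * (s - u)))) =
          ∑ j ∈ Finset.Icc 1 m, μ j * lagrangeWeight (Finset.Icc 1 m) μ j * μ (m + 1) *
            (Real.exp (-(μ j * u)) * Real.exp (-(μ (m + 1) * (s - u)))) := by
      intro u hu
      rw [Set.uIcc_of_le hs] at hu
      rw [ih (by omega) u hu.1, Finset.sum_mul]
      exact Finset.sum_congr rfl fun j _ => by ring
    rw [intervalIntegral.integral_congr hint, intervalIntegral.integral_finsetSum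
      (fun j _ => (by fun_prop : Continuous _).intervalIntegrable _ _)]
    refine Finset.sum_congr rfl fun j hj => ?_
    rw [intervalIntegral.integral_const_mul, integral_exp_convolution _ _ _ (hne j hj),
      lagrangeWeight_succ m j μ hj]
    ring

/-- Integrated CDF of a heterogeneous exponential sum. -/
theorem integrated_cdf_heterogeneous_exponential_sum (n : ℕ) (hn : 1 ≤ n) (μ : ℕ → ℝ)
    (hpos : ∀ i, 1 ≤ i → i ≤ n → 0 < μ i)
    (hdist : ∀ i j, 1 ≤ i → i ≤ n → 1 ≤ j → j ≤ n → i ≠ j → μ i ≠ μ j)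
    (φ : ℕ → ℝ → ℝ)
    (hφ1 : ∀ s : ℝ, 0 ≤ s → φ 1 s = μ 1 * Real.exp (-(μ 1 * s)))
    (hφ : ∀ ℓ, 1 ≤ ℓ → ∀ s : ℝ, 0 ≤ s →
      φ (ℓ + 1) s =
        ∫ u in (0:ℝ)..s, φ ℓ u * (μ (ℓ + 1) * Real.exp (-(μ (ℓ + 1) * (s - u)))))
    (t : ℝ) (ht : 0 ≤ t) :
    (∫ s in (0:ℝ)..t, ∫ u in (0:ℝ)..s, φ n u) =
      t - ∑ j ∈ Finset.Icc 1 n,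
        ((μ j * ∏ i ∈ (Finset.Icc 1 n).erase j, μ i / (μ i - μ j)) / μ j) *
          ((1 - Real.exp (-(μ j * t))) / μ j) := by
  have hinj : Set.InjOn μ (Finset.Icc 1 n : Finset ℕ) := by
    intro i hi j hj hij
    have hi' := Finset.mem_Icc.mp (Finset.mem_coe.mp hi)
    have hj' := Finset.mem_Icc.mp (Finset.mem_coe.mp hj)
    by_contra h
    exact hdist i j hi'.1 hi'.2 hj'.1 hj'.2 h hij
  have hμ : ∀ j ∈ Finset.Icc 1 n, μ j ≠ 0 := fun j hj =>
    (hpos j (Finset.mem_Icc.mp hj).1 (Finset.mem_Icc.mp hj).2).ne'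
  have hsum := sum_lagrangeWeight (Finset.Icc 1 n) μ hinj ⟨1, by simpa using hn⟩
  have hcdf : ∀ s ∈ Set.uIcc 0 t, ∫ u in (0:ℝ)..s, φ n u =
      1 - ∑ j ∈ Finset.Icc 1 n, lagrangeWeight (Finset.Icc 1 n) μ j * Real.exp (-(μ j * s)) := by
    intro s hs
    rw [Set.uIcc_of_le ht] at hs
    have hd : ∀ u ∈ Set.uIcc 0 s, φ n u = ∑ j ∈ Finset.Icc 1 n,
        μ j * lagrangeWeight (Finset.Icc 1 n) μ j * Real.exp (-(μ j * u)) := by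
      intro u hu
      rw [Set.uIcc_of_le hs.1] at hu
      exact density_formula n μ hinj φ hφ1 hφ n hn le_rfl u hu.1
    rw [intervalIntegral.integral_congr hd, intervalIntegral.integral_finsetSum
      (fun j _ => (by fun_prop : Continuous _).intervalIntegrable _ _), ← hsum,
      ← Finset.sum_sub_distrib]
    refine Finset.sum_congr rfl fun j hj => ?_
    have := hμ j hj
    rw [intervalIntegral.integral_const_mul, integral_exp_neg_mul _ _ this]
    field_simp
  rw [intervalIntegral.integral_congr hcdf, intervalIntegral.integral_sub
    (by simp) ((by fun_prop : Continuous _).intervalIntegrable _ _),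
    intervalIntegral.integral_finsetSum
      (fun j _ => (by fun_prop : Continuous _).intervalIntegrable _ _)]
  simp only [intervalIntegral.integral_const, sub_zero, smul_eq_mul, mul_one]
  congr 1
  refine Finset.sum_congr rfl fun j hj => ?_
  rw [intervalIntegral.integral_const_mul, integral_exp_neg_mul _ _ (hμ j hj),
    mul_div_cancel_left₀ _ (hμ j hj), lagrangeWeight]
end

section
/- (Lemma 5.4.) Let μ > 0, let k < ℓ be positive integers, and let 0 ≤ v ≤ t with t > 0. Then ∫_{t−v}^{t} (μ e^{-μx}(μx)^{k−1}/(k−1)!) · (Σ_{i=0}^{ℓ−k−1} e^{-μ(t−x)}(μ(t−x))^i/i!) dx = Σ_{j=k}^{ℓ−1} (e^{-μt}(μt)^j/j!) · Σ_{r=j−k+1}^{j} C(j,r) (v/t)^r (1−v/t)^{j−r}. -/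
/-!
The factors `e^{-μx}` and `e^{-μ(t-x)}` multiply to the constant `e^{-μt}`, so the `i`-th summand of
the left-hand side is `e^{-μt} μ^{k+i}` times `∫ x in (t-v)..t, x^(k-1) (t-x)^i / ((k-1)! i!)`.
An explicit antiderivative of the integrand is the negative of `betaTail t (k-1) i`, whose derivative
telescopes. It vanishes at `x = t`, and at `x = t - v` it equals `t^j / j!` times the tail
`P(Bin(j, v/t) > i)` of the binomial law with `j = k + i`; this is the `j`-th summand of the
right-hand side.
-/

open Finset in
/-- The truncated binomial expansion `∑ₛ (t-x)^(i+1+s) x^(m-s) / ((i+1+s)! (m-s)!)`, `0 ≤ s ≤ m`,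
i.e. the terms of `((t-x) + x)^(m+i+1) / (m+i+1)!` in which `t-x` has exponent greater than `i`. -/
noncomputable def betaTail (t : ℝ) (m i : ℕ) (x : ℝ) : ℝ :=
  ∑ s ∈ range (m + 1),
    (t - x) ^ (i + 1 + s) * x ^ (m - s) / ((i + 1 + s).factorial * (m - s).factorial)

lemma betaTail_zero (t : ℝ) (i : ℕ) (x : ℝ) :
    betaTail t 0 i x = (t - x) ^ (i + 1) / (i + 1).factorial := by
  simp [betaTail]

lemma betaTail_succ (t : ℝ) (m i : ℕ) (x : ℝ) :
    betaTail t (m + 1) i x = betaTail t m (i + 1) x +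
      (t - x) ^ (i + 1) * x ^ (m + 1) / ((i + 1).factorial * (m + 1).factorial) := by
  unfold betaTail
  rw [Finset.sum_range_succ']
  congr 1
  refine Finset.sum_congr rfl fun s _ => ?_
  rw [show i + 1 + (s + 1) = i + 1 + 1 + s by ring, Nat.add_sub_add_right]

lemma hasDerivAt_sub_pow_div (t x : ℝ) (i : ℕ) :
    HasDerivAt (fun y : ℝ => (t - y) ^ (i + 1) / (i + 1).factorial)
      (-((t - x) ^ i / i.factorial)) x := by
  have h := ((((hasDerivAt_id x).const_sub t).pow (i + 1)).div_const ((i + 1).factorial : ℝ))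
  refine h.congr_deriv ?_
  have := Nat.cast_ne_zero (R := ℝ).mpr i.factorial_ne_zero
  simp only [id, Nat.factorial_succ, Nat.add_sub_cancel]
  push_cast
  field_simp

lemma hasDerivAt_pow_div (x : ℝ) (m : ℕ) :
    HasDerivAt (fun y : ℝ => y ^ (m + 1) / (m + 1).factorial) (x ^ m / m.factorial) x := by
  have h := (((hasDerivAt_id x).pow (m + 1)).div_const ((m + 1).factorial : ℝ))
  refine h.congr_deriv ?_
  have := Nat.cast_ne_zero (R := ℝ).mpr m.factorial_ne_zero
  simp only [id, Nat.factorial_succ, Nat.add_sub_cancel]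
  push_cast
  field_simp

lemma hasDerivAt_betaTail (t x : ℝ) (m : ℕ) : ∀ i : ℕ,
    HasDerivAt (betaTail t m i) (-(x ^ m / m.factorial * ((t - x) ^ i / i.factorial))) x := by
  induction m with
  | zero =>
    intro i
    rw [show betaTail t 0 i = _ from funext (betaTail_zero t i)]
    simpa using hasDerivAt_sub_pow_div t x i
  | succ m ih =>
    intro i
    have h := (ih (i + 1)).add ((hasDerivAt_sub_pow_div t x i).mul (hasDerivAt_pow_div x m))
    refine (h.congr_deriv ?_).congr_of_eventuallyEq (Filter.Eventually.of_forall fun y => ?_)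
    · ring
    · simp only [betaTail_succ, Pi.add_apply, Pi.mul_apply, div_mul_div_comm]

lemma integral_pow_mul_sub_pow (t v : ℝ) (m i : ℕ) :
    ∫ x in (t - v)..t, x ^ m / m.factorial * ((t - x) ^ i / i.factorial) =
      betaTail t m i (t - v) := by
  have h := intervalIntegral.integral_eq_sub_of_hasDerivAt
    (a := t - v) (b := t) (f := fun x => -betaTail t m i x)
    (f' := fun x => x ^ m / m.factorial * ((t - x) ^ i / i.factorial))
    (fun x _ => (hasDerivAt_betaTail t x m i).neg.congr_deriv (neg_neg _))
    (Continuous.intervalIntegrable (by fun_prop) _ _)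
  have h0 : betaTail t m i t = 0 := by simp [betaTail]
  rw [h, h0]
  ring

/-- At `x = t - v` the truncated expansion is `t^j / j!` times the tail `P(Bin(j, v/t) > i)`,
where `j = m + 1 + i`. -/
lemma betaTail_eq_binomial_tail (t v : ℝ) (ht : t ≠ 0) (m i : ℕ) :
    betaTail t m i (t - v) = t ^ (m + 1 + i) / (m + 1 + i).factorial *
      ∑ r ∈ Finset.Icc (i + 1) (m + 1 + i),
        ((m + 1 + i).choose r : ℝ) * (v / t) ^ r * (1 - v / t) ^ (m + 1 + i - r) := by
  rw [← Finset.Ico_add_one_right_eq_Icc, Finset.sum_Ico_eq_sum_range,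
    show m + 1 + i + 1 - (i + 1) = m + 1 by omega, Finset.mul_sum]
  refine Finset.sum_congr rfl fun s hs => ?_
  have hs' : s ≤ m := by simpa [Nat.lt_succ_iff] using hs
  have hle : i + 1 + s ≤ m + 1 + i := by omega
  rw [Nat.cast_choose ℝ hle, show m + 1 + i - (i + 1 + s) = m - s by omega,
    one_sub_div ht, div_pow, div_pow, sub_sub_cancel,
    show t ^ (m + 1 + i) = t ^ (i + 1 + s) * t ^ (m - s) by rw [← pow_add]; congr 1; omega]
  have h1 := Nat.cast_ne_zero (R := ℝ).mpr (m + 1 + i).factorial_ne_zero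
  have h2 := Nat.cast_ne_zero (R := ℝ).mpr (i + 1 + s).factorial_ne_zero
  have h3 := Nat.cast_ne_zero (R := ℝ).mpr (m - s).factorial_ne_zero
  field_simp

/-- Lemma 5.4. -/
theorem psi_poisson_binomial_identity (μ : ℝ) (hμ : 0 < μ) (k ℓ : ℕ) (hk : 1 ≤ k)
    (hkl : k < ℓ) (v t : ℝ) (hv : 0 ≤ v) (hvt : v ≤ t) (ht : 0 < t) :
    (∫ x in (t - v)..t,
        (μ * Real.exp (-(μ * x)) * (μ * x) ^ (k - 1) / (Nat.factorial (k - 1))) *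
          (∑ i ∈ Finset.range (ℓ - k),
            Real.exp (-(μ * (t - x))) * (μ * (t - x)) ^ i / (Nat.factorial i))) =
      ∑ j ∈ Finset.Icc k (ℓ - 1),
        (Real.exp (-(μ * t)) * (μ * t) ^ j / (Nat.factorial j)) *
          (∑ r ∈ Finset.Icc (j - k + 1) j,
            (Nat.choose j r : ℝ) * (v / t) ^ r * (1 - v / t) ^ (j - r)) := by
  obtain ⟨m, rfl⟩ : ∃ m, k = m + 1 := ⟨k - 1, by omega⟩
  have hint : ∀ x : ℝ,
      (μ * Real.exp (-(μ * x)) * (μ * x) ^ (m + 1 - 1) / (Nat.factorial (m + 1 - 1))) *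
          (∑ i ∈ Finset.range (ℓ - (m + 1)),
            Real.exp (-(μ * (t - x))) * (μ * (t - x)) ^ i / (Nat.factorial i)) =
        ∑ i ∈ Finset.range (ℓ - (m + 1)), Real.exp (-(μ * t)) * μ ^ (m + 1 + i) *
          (x ^ m / m.factorial * ((t - x) ^ i / i.factorial)) := by
    intro x
    rw [Finset.mul_sum]
    refine Finset.sum_congr rfl fun i _ => ?_
    have hexp : Real.exp (-(μ * t)) = Real.exp (-(μ * x)) * Real.exp (-(μ * (t - x))) := by
      rw [← Real.exp_add]; congr 1; ring
    rw [hexp, Nat.add_sub_cancel, mul_pow, mul_pow]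
    ring
  simp_rw [hint]
  rw [intervalIntegral.integral_finsetSum
    (fun i _ => Continuous.intervalIntegrable (by fun_prop) _ _),
    ← Finset.Ico_add_one_right_eq_Icc, show ℓ - 1 + 1 = ℓ by omega, Finset.sum_Ico_eq_sum_range]
  refine Finset.sum_congr rfl fun i _ => ?_
  rw [intervalIntegral.integral_const_mul, integral_pow_mul_sub_pow,
    betaTail_eq_binomial_tail t v ht.ne', Nat.add_sub_cancel_left, mul_pow]
  ring
end

section
/- (Lemma 5.5.) Let μ₁, μ₂ > 0, let m, k ≥ 1 be integers, and let t ≥ 0. Define G(s) := ∫₀ˢ μ₁ e^{-μ₁u}(μ₁u)^{m−1}/(m−1)! · (1 − Σ_{j=0}^{k−1} e^{-μ₂(s−u)}(μ₂(s−u))^j/j!) du. Then ∫₀ᵗ G(s) ds = (t − k/μ₂)·Erl_{m,μ₁}(t) − (m/μ₁)·Erl_{m+1,μ₁}(t) + (μ₁/μ₂) Σ_{i=0}^{k−1} (k−i)·ρ_t[m−1,i]. -/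
/-!
Write `p_j(y) = e^{-y} y^j / j!`. Exchanging the order of integration over the triangle
`0 ≤ u ≤ s ≤ t` (`integral_triangle_swap`) turns the left-hand side into
`∫₀ᵗ f(u) H(t - u) du`, where `f` is the Erlang density of shape `m` and rate `μ₁`, and
`H(x) = ∫₀ˣ Erl_{k,μ₂}`. Since `p_j' = p_{j-1} - p_j`, telescoping sums give the closed forms
`H(x) = x - k/μ₂ + (1/μ₂) ∑_{i<k} (k - i) p_i(μ₂ x)` (`integral_erlangCDF_shift`) and
`∫₀ᵗ f = Erl_{m,μ₁}(t)` (`integral_erlangDensity`). The linear part of `H` then produces the two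
Erlang terms, because `u f(u)` is `m/μ₁` times the Erlang density of shape `m + 1`, and the
remaining sum produces the terms `ρ_t[m-1,i]`.
-/

/-- `ρ_t[m,k] = ∫₀ᵗ e^{-μ₁u}(μ₁u)^m/m! · e^{-μ₂(t−u)}(μ₂(t−u))^k/k! du`. -/
noncomputable def rho (μ₁ μ₂ t : ℝ) (m k : ℕ) : ℝ :=
  ∫ u in (0:ℝ)..t,
    (Real.exp (-(μ₁ * u)) * (μ₁ * u) ^ m / (Nat.factorial m)) *
      (Real.exp (-(μ₂ * (t - u))) * (μ₂ * (t - u)) ^ k / (Nat.factorial k))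

/-- `Erl_{m,μ}(t)`, the CDF of the Erlang distribution with shape `m` and rate `μ`. -/
noncomputable def erlangCDF (m : ℕ) (μ t : ℝ) : ℝ :=
  1 - ∑ i ∈ Finset.range m, Real.exp (-(μ * t)) * (μ * t) ^ i / (Nat.factorial i)

open MeasureTheory

lemma integral_triangle_swap (g : ℝ → ℝ → ℝ) (hg : Continuous (Function.uncurry g))
    (t : ℝ) (ht : 0 ≤ t) :
    (∫ s in (0:ℝ)..t, ∫ u in (0:ℝ)..s, g s u) = ∫ u in (0:ℝ)..t, ∫ s in u..t, g s u := by
  have hmeas : MeasurableSet {p : ℝ × ℝ | p.2 ≤ p.1} :=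
    measurableSet_le measurable_snd measurable_fst
  have hint : IntegrableOn (Function.uncurry g) (Set.Ioc 0 t ×ˢ Set.Ioc 0 t)
      (volume.prod volume) :=
    (hg.continuousOn.integrableOn_compact (isCompact_Icc.prod isCompact_Icc)).mono_set
      (Set.prod_mono Set.Ioc_subset_Icc_self Set.Ioc_subset_Icc_self)
  have hint2 : Integrable (Function.uncurry fun s u => if u ≤ s then g s u else 0)
      ((volume.restrict (Set.Ioc 0 t)).prod (volume.restrict (Set.Ioc 0 t))) := by
    rw [Measure.prod_restrict]
    refine (Integrable.indicator hint hmeas).congr (Filter.Eventually.of_forall ?_)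
    rintro ⟨s, u⟩
    simp [Set.indicator_apply]
  have hswap := integral_integral_swap hint2
  rw [intervalIntegral.integral_of_le ht, intervalIntegral.integral_of_le ht]
  convert hswap using 1
  · refine setIntegral_congr_fun measurableSet_Ioc fun s hs => ?_
    have hind : (fun u => if u ≤ s then g s u else 0) = (Set.Iic s).indicator (g s) := by
      ext u; simp [Set.indicator_apply]
    simp only [hind]
    rw [intervalIntegral.integral_of_le hs.1.le, setIntegral_indicator measurableSet_Iic,
      Set.Ioc_inter_Iic, min_eq_right hs.2]
  · refine setIntegral_congr_fun measurableSet_Ioc fun u hu => ?_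
    have hind : (fun s => if u ≤ s then g s u else 0)
        = (Set.Ici u).indicator (fun s => g s u) := by
      ext s; simp [Set.indicator_apply]
    simp only [hind]
    rw [intervalIntegral.integral_of_le hu.2, setIntegral_indicator measurableSet_Ici,
      ← integral_Icc_eq_integral_Ioc]
    congr 2
    ext s
    simp only [Set.mem_Icc, Set.mem_inter_iff, Set.mem_Ioc, Set.mem_Ici]
    exact ⟨fun h => ⟨⟨hu.1.trans_le h.1, h.2⟩, h.1⟩, fun h => ⟨h.2, h.1.2⟩⟩

lemma hasDerivAt_erlangCDF_succ (n : ℕ) (μ x : ℝ) :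
    HasDerivAt (erlangCDF (n + 1) μ)
      (μ * Real.exp (-(μ * x)) * (μ * x) ^ n / (Nat.factorial n)) x := by
  have hlin : HasDerivAt (fun y : ℝ => μ * y) μ x := by
    simpa using (hasDerivAt_id x).const_mul μ
  induction n with
  | zero =>
    have h : erlangCDF (0 + 1) μ = fun y => 1 - Real.exp (-(μ * y)) := by
      ext y; simp [erlangCDF]
    rw [h]
    refine (hlin.fun_neg.exp.const_sub 1).congr_deriv ?_
    simp; ring
  | succ n ih =>
    have h : erlangCDF (n + 1 + 1) μ = fun y => erlangCDF (n + 1) μ y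
        - Real.exp (-(μ * y)) * (μ * y) ^ (n + 1) / (Nat.factorial (n + 1)) := by
      ext y; simp only [erlangCDF]; rw [Finset.sum_range_succ _ (n + 1)]; ring
    rw [h]
    refine (ih.sub ((hlin.fun_neg.exp.mul (hlin.fun_pow (n + 1))).div_const _)).congr_deriv ?_
    have hf : (Nat.factorial n : ℝ) ≠ 0 := by positivity
    have hn : (n : ℝ) + 1 ≠ 0 := by positivity
    rw [Nat.factorial_succ]
    push_cast
    field_simp
    ring

lemma continuous_erlangCDF (n : ℕ) (μ : ℝ) : Continuous (erlangCDF n μ) := by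
  unfold erlangCDF
  fun_prop

lemma erlangCDF_succ_zero (n : ℕ) (μ : ℝ) : erlangCDF (n + 1) μ 0 = 0 := by
  simp [erlangCDF, Finset.sum_range_succ']

lemma integral_erlangDensity (n : ℕ) (μ t : ℝ) :
    (∫ u in (0:ℝ)..t, μ * Real.exp (-(μ * u)) * (μ * u) ^ n / (Nat.factorial n))
      = erlangCDF (n + 1) μ t := by
  rw [intervalIntegral.integral_eq_sub_of_hasDerivAt
    (fun x _ => hasDerivAt_erlangCDF_succ n μ x)
    (Continuous.intervalIntegrable (by fun_prop) _ _), erlangCDF_succ_zero, sub_zero]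

/-- Summation by parts for the closed form of `∫₀ˣ Erl_{k,μ}`: the right-hand side is the one that is
easy to differentiate term by term. -/
lemma linear_add_sum_eq (k : ℕ) (μ x : ℝ) :
    x - (k : ℝ) / μ + 1 / μ * ∑ i ∈ Finset.range k,
        ((k : ℝ) - i) * (Real.exp (-(μ * x)) * (μ * x) ^ i / (Nat.factorial i))
      = x - 1 / μ * ∑ j ∈ Finset.range k, erlangCDF (j + 1) μ x := by
  induction k with
  | zero => simp
  | succ k ih =>
    rw [Finset.sum_range_succ (fun j => erlangCDF (j + 1) μ x), mul_add, ← sub_sub, ← ih]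
    have hsum : ∑ i ∈ Finset.range (k + 1), (((k + 1 : ℕ) : ℝ) - i) *
          (Real.exp (-(μ * x)) * (μ * x) ^ i / (Nat.factorial i))
        = ∑ i ∈ Finset.range k, ((k : ℝ) - i) *
            (Real.exp (-(μ * x)) * (μ * x) ^ i / (Nat.factorial i))
          + ∑ i ∈ Finset.range (k + 1),
            Real.exp (-(μ * x)) * (μ * x) ^ i / (Nat.factorial i) := by
      rw [Finset.sum_range_succ, Finset.sum_range_succ, ← add_assoc, ← Finset.sum_add_distrib]
      push_cast
      congr 1
      · exact Finset.sum_congr rfl fun i _ => by ring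
      · ring
    rw [hsum, erlangCDF]
    push_cast
    ring

/-- Primitive of the Erlang CDF: differentiating
`x - (1/μ) ∑_{j=1}^{k} Erl_{j,μ}(x)` gives `1 - ∑_{j<k} p_j(μ x)`. -/
lemma integral_erlangCDF_shift (k : ℕ) (μ : ℝ) (hμ : 0 < μ) (u t : ℝ) :
    (∫ s in u..t, erlangCDF k μ (s - u)) = (t - u) - (k : ℝ) / μ + 1 / μ *
      ∑ i ∈ Finset.range k, ((k : ℝ) - i) *
        (Real.exp (-(μ * (t - u))) * (μ * (t - u)) ^ i / (Nat.factorial i)) := by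
  rw [linear_add_sum_eq, intervalIntegral.integral_comp_sub_right (erlangCDF k μ) u, sub_self]
  have hderiv : ∀ x : ℝ, HasDerivAt
      (fun x => x - 1 / μ * ∑ j ∈ Finset.range k, erlangCDF (j + 1) μ x)
      (erlangCDF k μ x) x := by
    intro x
    refine ((hasDerivAt_id x).sub ((HasDerivAt.fun_sum fun j _ =>
      hasDerivAt_erlangCDF_succ j μ x).const_mul (1 / μ))).congr_deriv ?_
    rw [erlangCDF, Finset.mul_sum]
    congr 1
    exact Finset.sum_congr rfl fun i _ => by field_simp
  rw [intervalIntegral.integral_eq_sub_of_hasDerivAt (fun x _ => hderiv x)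
    ((continuous_erlangCDF k μ).intervalIntegrable _ _)]
  simp [erlangCDF_succ_zero]

/-- Lemma 5.5. -/
theorem integrated_erlang_sum_cdf (μ₁ μ₂ : ℝ) (h1 : 0 < μ₁) (h2 : 0 < μ₂)
    (m k : ℕ) (hm : 1 ≤ m) (hk : 1 ≤ k) (t : ℝ) (ht : 0 ≤ t) :
    (∫ s in (0:ℝ)..t, ∫ u in (0:ℝ)..s,
        (μ₁ * Real.exp (-(μ₁ * u)) * (μ₁ * u) ^ (m - 1) / (Nat.factorial (m - 1))) *
          (1 - ∑ j ∈ Finset.range k,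
            Real.exp (-(μ₂ * (s - u))) * (μ₂ * (s - u)) ^ j / (Nat.factorial j))) =
      (t - (k : ℝ) / μ₂) * erlangCDF m μ₁ t - ((m : ℝ) / μ₁) * erlangCDF (m + 1) μ₁ t +
        (μ₁ / μ₂) * ∑ i ∈ Finset.range k, ((k : ℝ) - i) * rho μ₁ μ₂ t (m - 1) i := by
  obtain ⟨n, rfl⟩ : ∃ n, m = n + 1 := ⟨m - 1, by omega⟩
  simp only [Nat.add_sub_cancel]
  rw [integral_triangle_swap _ (by unfold Function.uncurry; fun_prop) t ht]
  have hinner : ∀ u : ℝ, (∫ s in u..t,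
      (μ₁ * Real.exp (-(μ₁ * u)) * (μ₁ * u) ^ n / (Nat.factorial n)) *
          (1 - ∑ j ∈ Finset.range k,
            Real.exp (-(μ₂ * (s - u))) * (μ₂ * (s - u)) ^ j / (Nat.factorial j)))
      = (t - (k : ℝ) / μ₂) *
          (μ₁ * Real.exp (-(μ₁ * u)) * (μ₁ * u) ^ n / (Nat.factorial n))
        - (((n + 1 : ℕ) : ℝ) / μ₁) *
          (μ₁ * Real.exp (-(μ₁ * u)) * (μ₁ * u) ^ (n + 1) / (Nat.factorial (n + 1)))
        + (μ₁ / μ₂) * ∑ i ∈ Finset.range k, ((k : ℝ) - i) *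
          ((Real.exp (-(μ₁ * u)) * (μ₁ * u) ^ n / (Nat.factorial n)) *
            (Real.exp (-(μ₂ * (t - u))) * (μ₂ * (t - u)) ^ i / (Nat.factorial i))) := by
    intro u
    rw [intervalIntegral.integral_const_mul]
    have hH := integral_erlangCDF_shift k μ₂ h2 u t
    simp only [erlangCDF] at hH
    rw [hH]
    have hsum : ∑ i ∈ Finset.range k, ((k : ℝ) - i) *
          ((Real.exp (-(μ₁ * u)) * (μ₁ * u) ^ n / (Nat.factorial n)) *
            (Real.exp (-(μ₂ * (t - u))) * (μ₂ * (t - u)) ^ i / (Nat.factorial i)))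
        = (Real.exp (-(μ₁ * u)) * (μ₁ * u) ^ n / (Nat.factorial n)) *
          ∑ i ∈ Finset.range k, ((k : ℝ) - i) *
            (Real.exp (-(μ₂ * (t - u))) * (μ₂ * (t - u)) ^ i / (Nat.factorial i)) := by
      rw [Finset.mul_sum]
      exact Finset.sum_congr rfl fun i _ => by ring
    rw [hsum]
    generalize ∑ i ∈ Finset.range k, ((k : ℝ) - i) *
      (Real.exp (-(μ₂ * (t - u))) * (μ₂ * (t - u)) ^ i / (Nat.factorial i)) = S
    have hf : (Nat.factorial n : ℝ) ≠ 0 := by positivity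
    have hn : (n : ℝ) + 1 ≠ 0 := by positivity
    rw [Nat.factorial_succ]
    push_cast
    field_simp
    ring
  simp only [hinner]
  have hci : ∀ {f : ℝ → ℝ}, Continuous f → IntervalIntegrable f volume 0 t :=
    fun hf => hf.intervalIntegrable _ _
  rw [intervalIntegral.integral_add (hci (by fun_prop)) (hci (by fun_prop)),
    intervalIntegral.integral_sub (hci (by fun_prop)) (hci (by fun_prop)),
    intervalIntegral.integral_const_mul, intervalIntegral.integral_const_mul,
    intervalIntegral.integral_const_mul, integral_erlangDensity, integral_erlangDensity,
    intervalIntegral.integral_finsetSum fun i _ => hci (by fun_prop)]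
  simp only [intervalIntegral.integral_const_mul, rho]
end

section
/- (Recursion for ρ.) Let μ₁, μ₂ > 0 with μ₁ ≠ μ₂, let m, k ≥ 1 be integers, and let t ≥ 0. Then ρ_t[m,k] = (μ₁·ρ_t[m−1,k] − μ₂·ρ_t[m,k−1]) / (μ₁ − μ₂). -/
/-- The Poisson weights satisfy `p_{n+1}' = p_n - p_{n+1}`. -/
lemma hasDerivAt_poissonWeight (n : ℕ) (x : ℝ) :
    HasDerivAt (fun x : ℝ => Real.exp (-x) * x ^ (n + 1) / (Nat.factorial (n + 1)))
      (Real.exp (-x) * x ^ n / (Nat.factorial n)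
        - Real.exp (-x) * x ^ (n + 1) / (Nat.factorial (n + 1))) x := by
  have h := (((hasDerivAt_neg x).exp).mul (hasDerivAt_pow (n + 1) x)).div_const
    (Nat.factorial (n + 1) : ℝ)
  refine h.congr_deriv ?_
  have hf : (Nat.factorial n : ℝ) ≠ 0 := by positivity
  have hn : (n : ℝ) + 1 ≠ 0 := by positivity
  rw [Nat.factorial_succ]
  push_cast
  field_simp
  ring

/-- Recursion for ρ. -/
theorem rho_recursion (μ₁ μ₂ : ℝ) (h1 : 0 < μ₁) (h2 : 0 < μ₂) (hne : μ₁ ≠ μ₂)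
    (m k : ℕ) (hm : 1 ≤ m) (hk : 1 ≤ k) (t : ℝ) (ht : 0 ≤ t) :
    rho μ₁ μ₂ t m k =
      (μ₁ * rho μ₁ μ₂ t (m - 1) k - μ₂ * rho μ₁ μ₂ t m (k - 1)) / (μ₁ - μ₂) := by
  obtain ⟨m, rfl⟩ := Nat.exists_eq_add_of_le' hm
  obtain ⟨k, rfl⟩ := Nat.exists_eq_add_of_le' hk
  simp only [Nat.add_sub_cancel]
  rw [eq_div_iff (sub_ne_zero.mpr hne)]
  let G : ℕ → ℕ → ℝ → ℝ := fun m k u =>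
    (Real.exp (-(μ₁ * u)) * (μ₁ * u) ^ m / (Nat.factorial m)) *
      (Real.exp (-(μ₂ * (t - u))) * (μ₂ * (t - u)) ^ k / (Nat.factorial k))
  have hG : ∀ i j, IntervalIntegrable (G i j) MeasureTheory.volume 0 t := fun i j => by
    apply Continuous.intervalIntegrable
    fun_prop
  have hρ : ∀ i j, rho μ₁ μ₂ t i j = ∫ u in (0:ℝ)..t, G i j u := fun _ _ => rfl
  have hderiv : ∀ u : ℝ, HasDerivAt (G (m + 1) (k + 1))
      (μ₁ * G m (k + 1) u - μ₂ * G (m + 1) k u - (μ₁ - μ₂) * G (m + 1) (k + 1) u) u := by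
    intro u
    have ha : HasDerivAt (fun u : ℝ => μ₁ * u) μ₁ u := by
      simpa using (hasDerivAt_id u).const_mul μ₁
    have hb : HasDerivAt (fun u : ℝ => μ₂ * (t - u)) (-μ₂) u := by
      simpa using ((hasDerivAt_id u).const_sub t).const_mul μ₂
    have h := ((hasDerivAt_poissonWeight m (μ₁ * u)).comp u ha).mul
      ((hasDerivAt_poissonWeight k (μ₂ * (t - u))).comp u hb)
    refine h.congr_deriv ?_
    simp only [G, Function.comp]
    ring
  have hA := (hG m (k + 1)).const_mul μ₁
  have hB := (hG (m + 1) k).const_mul μ₂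
  have hC := (hG (m + 1) (k + 1)).const_mul (μ₁ - μ₂)
  have hftc := intervalIntegral.integral_eq_sub_of_hasDerivAt (fun u _ => hderiv u)
    ((hA.sub hB).sub hC)
  rw [intervalIntegral.integral_sub (hA.sub hB) hC, intervalIntegral.integral_sub hA hB,
    intervalIntegral.integral_const_mul, intervalIntegral.integral_const_mul,
    intervalIntegral.integral_const_mul, ← hρ, ← hρ, ← hρ] at hftc
  have h0 : G (m + 1) (k + 1) 0 = 0 := by simp [G]
  have h3 : G (m + 1) (k + 1) t = 0 := by simp [G]
  rw [h0, h3] at hftc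
  linarith
end

section
/- (Closed forms for boundary ρ values.) Let μ₁, μ₂ > 0 with μ₁ ≠ μ₂, and let t ≥ 0. Then for every integer m ≥ 0, ρ_t[m,0] = (μ₁^m e^{-μ₂t}/(μ₁−μ₂)^{m+1}) · (1 − Σ_{i=0}^{m} e^{(μ₂−μ₁)t}((μ₁−μ₂)t)^i/i!), and for every integer k ≥ 0, ρ_t[0,k] = (μ₂^k e^{-μ₁t}/(μ₂−μ₁)^{k+1}) · (1 − Σ_{i=0}^{k} e^{(μ₁−μ₂)t}((μ₂−μ₁)t)^i/i!). -/
/-- The `u`-derivative of the Poisson distribution function with parameter `d * u` telescopes to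
`-d` times the last Poisson weight. -/
lemma hasDerivAt_poissonSum_s11 (d u : ℝ) (m : ℕ) :
    HasDerivAt
      (fun u : ℝ => ∑ i ∈ Finset.range (m + 1),
        Real.exp (-(d * u)) * (d * u) ^ i / (Nat.factorial i))
      (-(d * (Real.exp (-(d * u)) * (d * u) ^ m / (Nat.factorial m)))) u := by
  have hlin : HasDerivAt (fun u : ℝ => d * u) d u := by
    simpa using (hasDerivAt_id u).const_mul d
  have hexp : HasDerivAt (fun u : ℝ => Real.exp (-(d * u))) (Real.exp (-(d * u)) * -d) u :=
    hlin.neg.exp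
  induction m with
  | zero =>
    simp only [zero_add, Finset.sum_range_one, pow_zero, Nat.factorial_zero, Nat.cast_one,
      mul_one, div_one]
    convert hexp using 1
    ring
  | succ n ih =>
    simp only [Finset.sum_range_succ _ (n + 1)]
    refine (ih.add ((hexp.mul (hlin.pow (n + 1))).div_const
      ((Nat.factorial (n + 1) : ℕ) : ℝ))).congr_deriv ?_
    have hn : (Nat.factorial n : ℝ) ≠ 0 := by positivity
    have hn1 : (n : ℝ) + 1 ≠ 0 := by positivity
    simp only [Nat.factorial_succ, Nat.cast_mul, Nat.cast_add, Nat.cast_one,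
      Nat.add_sub_cancel, Pi.pow_apply]
    field_simp
    ring

lemma integral_poissonWeight (d t : ℝ) (m : ℕ) :
    ∫ u in (0:ℝ)..t, d * (Real.exp (-(d * u)) * (d * u) ^ m / (Nat.factorial m)) =
      1 - ∑ i ∈ Finset.range (m + 1),
        Real.exp (-(d * t)) * (d * t) ^ i / (Nat.factorial i) := by
  have key := intervalIntegral.integral_eq_sub_of_hasDerivAt (a := 0) (b := t)
    (fun u _ => (hasDerivAt_poissonSum_s11 d u m).neg)
    (Continuous.intervalIntegrable (by fun_prop) _ _)
  -- At `u = 0` only the term `i = 0` of the sum survives.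
  have h0 : ∑ i ∈ Finset.range (m + 1),
      Real.exp (-(d * 0)) * (d * 0) ^ i / (Nat.factorial i : ℝ) = 1 := by
    rw [Finset.sum_range_succ']
    simp
  simp only [neg_neg, Pi.neg_apply, h0] at key
  rw [key]
  ring

lemma rho_zero_right (μ₁ μ₂ : ℝ) (hne : μ₁ ≠ μ₂) (t : ℝ) (m : ℕ) :
    rho μ₁ μ₂ t m 0 =
      (μ₁ ^ m * Real.exp (-(μ₂ * t)) / (μ₁ - μ₂) ^ (m + 1)) *
        (1 - ∑ i ∈ Finset.range (m + 1),
          Real.exp ((μ₂ - μ₁) * t) * ((μ₁ - μ₂) * t) ^ i / (Nat.factorial i)) := by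
  have hd : μ₁ - μ₂ ≠ 0 := sub_ne_zero.mpr hne
  have hexp : (μ₂ - μ₁) * t = -((μ₁ - μ₂) * t) := by ring
  rw [hexp, ← integral_poissonWeight, ← intervalIntegral.integral_const_mul, rho]
  refine intervalIntegral.integral_congr fun u _ => ?_
  have hsplit : Real.exp (-(μ₁ * u)) * Real.exp (-(μ₂ * (t - u))) =
      Real.exp (-(μ₂ * t)) * Real.exp (-((μ₁ - μ₂) * u)) := by
    rw [← Real.exp_add, ← Real.exp_add]
    congr 1
    ring
  simp only [pow_zero, Nat.factorial_zero, Nat.cast_one, mul_one, div_one]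
  calc Real.exp (-(μ₁ * u)) * (μ₁ * u) ^ m / (Nat.factorial m) * Real.exp (-(μ₂ * (t - u)))
      = (Real.exp (-(μ₁ * u)) * Real.exp (-(μ₂ * (t - u)))) * (μ₁ * u) ^ m /
          (Nat.factorial m) := by ring
    _ = _ := by
      rw [hsplit, mul_pow, mul_pow]
      field_simp
      ring

lemma rho_swap (μ₁ μ₂ t : ℝ) (m k : ℕ) : rho μ₁ μ₂ t m k = rho μ₂ μ₁ t k m := by
  have h := intervalIntegral.integral_comp_sub_left (a := 0) (b := t)
    (fun u : ℝ => (Real.exp (-(μ₁ * u)) * (μ₁ * u) ^ m / (Nat.factorial m)) *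
      (Real.exp (-(μ₂ * (t - u))) * (μ₂ * (t - u)) ^ k / (Nat.factorial k))) t
  simp only [sub_self, sub_zero, sub_sub_cancel] at h
  rw [rho, rho, ← h]
  exact intervalIntegral.integral_congr fun u _ => mul_comm _ _

/-- Closed forms for boundary ρ values. -/
theorem rho_boundary_closed_forms (μ₁ μ₂ : ℝ) (h1 : 0 < μ₁) (h2 : 0 < μ₂) (hne : μ₁ ≠ μ₂)
    (t : ℝ) (ht : 0 ≤ t) :
    (∀ m : ℕ, rho μ₁ μ₂ t m 0 =
      (μ₁ ^ m * Real.exp (-(μ₂ * t)) / (μ₁ - μ₂) ^ (m + 1)) *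
        (1 - ∑ i ∈ Finset.range (m + 1),
          Real.exp ((μ₂ - μ₁) * t) * ((μ₁ - μ₂) * t) ^ i / (Nat.factorial i))) ∧
    (∀ k : ℕ, rho μ₁ μ₂ t 0 k =
      (μ₂ ^ k * Real.exp (-(μ₁ * t)) / (μ₂ - μ₁) ^ (k + 1)) *
        (1 - ∑ i ∈ Finset.range (k + 1),
          Real.exp ((μ₁ - μ₂) * t) * ((μ₂ - μ₁) * t) ^ i / (Nat.factorial i))) := by
  exact ⟨fun m => rho_zero_right μ₁ μ₂ hne t m, fun k => by
    rw [rho_swap]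
    exact rho_zero_right μ₂ μ₁ hne.symm t k⟩
end

section
/- (Lemma 5.6.) Let μ₁, μ₂ > 0, let k, ℓ ≥ 1 be integers, and let 0 ≤ v ≤ t. Let d(s) := ∫₀ˢ μ₁ e^{-μ₁u}(μ₁u)^{k−1}/(k−1)! · μ₂ e^{-μ₂(s−u)}(μ₂(s−u))^{ℓ−1}/(ℓ−1)! du denote the density at s of the sum of independent Erlang(k,μ₁) and Erlang(ℓ,μ₂) random variables. Then ∫_{t−v}^{t} e^{-μ₁(t−s)} d(s) ds = μ₂·ρ_t[k,ℓ−1] − e^{-μ₁v}·μ₂·ρ_{t−v}[k,ℓ−1], and ∫_{t−v}^{t} e^{-μ₂(t−s)} d(s) ds = μ₁·ρ_t[k−1,ℓ] − e^{-μ₂v}·μ₁·ρ_{t−v}[k−1,ℓ]. -/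
/-- The density at `s` of the sum of independent Erlang(k,μ₁) and Erlang(ℓ,μ₂). -/
noncomputable def erlangSumPDF (μ₁ μ₂ : ℝ) (k ℓ : ℕ) (s : ℝ) : ℝ :=
  ∫ u in (0:ℝ)..s,
    (μ₁ * Real.exp (-(μ₁ * u)) * (μ₁ * u) ^ (k - 1) / (Nat.factorial (k - 1))) *
      (μ₂ * Real.exp (-(μ₂ * (s - u))) * (μ₂ * (s - u)) ^ (ℓ - 1) / (Nat.factorial (ℓ - 1)))

/-- The moment integral `∫₀ˢ (s - w)^n h(w) dw`. -/
noncomputable def convPow (h : ℝ → ℝ) (n : ℕ) (s : ℝ) : ℝ :=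
  ∫ w in (0:ℝ)..s, (s - w) ^ n * h w

lemma convPow_succ {h : ℝ → ℝ} (hh : Continuous h) (n : ℕ) (s : ℝ) :
    convPow h (n + 1) s = s * convPow h n s - convPow (fun w => w * h w) n s := by
  unfold convPow
  rw [← intervalIntegral.integral_const_mul, ← intervalIntegral.integral_sub]
  · congr 1
    ext w
    ring
  · exact Continuous.intervalIntegrable (by fun_prop) _ _
  · exact Continuous.intervalIntegrable (by fun_prop) _ _

lemma hasDerivAt_convPow_zero {h : ℝ → ℝ} (hh : Continuous h) (s : ℝ) :
    HasDerivAt (convPow h 0) (h s) s := by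
  have e : convPow h 0 = fun s => ∫ w in (0:ℝ)..s, h w := by
    ext s
    simp [convPow]
  rw [e]
  exact hh.integral_hasStrictDerivAt 0 s |>.hasDerivAt

/-- Induction on `n` through the recursion `convPow_succ`, which avoids differentiating under the
integral sign; the statement is quantified over `h` because the recursion replaces `h w` by
`w * h w`. -/
lemma hasDerivAt_convPow (n : ℕ) : ∀ {h : ℝ → ℝ}, Continuous h → ∀ s : ℝ,
    HasDerivAt (convPow h (n + 1)) ((n + 1) * convPow h n s) s := by
  induction n with
  | zero =>
    intro h hh s
    have e : convPow h (0 + 1) =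
        fun s => s * convPow h 0 s - convPow (fun w => w * h w) 0 s :=
      funext (convPow_succ hh 0)
    rw [e]
    have d := ((hasDerivAt_id s).mul (hasDerivAt_convPow_zero hh s)).sub
      (hasDerivAt_convPow_zero (h := fun w => w * h w) (by fun_prop) s)
    refine d.congr_deriv ?_
    simp
  | succ n ih =>
    intro h hh s
    have e : convPow h (n + 1 + 1) =
        fun s => s * convPow h (n + 1) s - convPow (fun w => w * h w) (n + 1) s :=
      funext (convPow_succ hh (n + 1))
    rw [e]
    have d := ((hasDerivAt_id s).mul (ih hh s)).sub
      (ih (h := fun w => w * h w) (by fun_prop) s)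
    refine d.congr_deriv ?_
    have r := convPow_succ hh n s
    simp only [id]
    push_cast
    linear_combination (-(n : ℝ) - 1) * r

lemma continuous_convPow {h : ℝ → ℝ} (hh : Continuous h) (n : ℕ) : Continuous (convPow h n) := by
  refine continuous_iff_continuousAt.2 fun s => ?_
  cases n with
  | zero => exact (hasDerivAt_convPow_zero hh s).continuousAt
  | succ n => exact (hasDerivAt_convPow n hh s).continuousAt

lemma integral_convPow {h : ℝ → ℝ} (hh : Continuous h) (n : ℕ) (a b : ℝ) :
    (n + 1) * ∫ s in a..b, convPow h n s = convPow h (n + 1) b - convPow h (n + 1) a := by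
  rw [← intervalIntegral.integral_const_mul]
  exact intervalIntegral.integral_eq_sub_of_hasDerivAt
    (fun s _ => hasDerivAt_convPow n hh s)
    ((continuous_const.mul (continuous_convPow hh n)).intervalIntegrable _ _)

/-- The weight left over from the first stage (with `m = k - 1`) after `e^{-μ₂ s}` has been
factored out of the convolution at time `s`. -/
noncomputable def stageWeight (μ₁ μ₂ : ℝ) (m : ℕ) (w : ℝ) : ℝ :=
  Real.exp ((μ₂ - μ₁) * w) * (μ₁ * w) ^ m

lemma continuous_stageWeight (μ₁ μ₂ : ℝ) (m : ℕ) : Continuous (stageWeight μ₁ μ₂ m) := by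
  unfold stageWeight
  fun_prop

lemma exp_split (μ₁ μ₂ s u : ℝ) : Real.exp (-(μ₁ * u)) * Real.exp (-(μ₂ * (s - u))) =
    Real.exp (-(μ₂ * s)) * Real.exp ((μ₂ - μ₁) * u) := by
  rw [← Real.exp_add, ← Real.exp_add]
  ring_nf

lemma rho_eq_convPow (μ₁ μ₂ s : ℝ) (m n : ℕ) :
    rho μ₁ μ₂ s m n = Real.exp (-(μ₂ * s)) * (μ₂ ^ n / (m.factorial * n.factorial)) *
      convPow (stageWeight μ₁ μ₂ m) n s := by
  unfold rho convPow stageWeight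
  rw [← intervalIntegral.integral_const_mul]
  congr 1
  ext u
  rw [mul_pow μ₂ (s - u) n]
  linear_combination ((μ₁ * u) ^ m / m.factorial * (μ₂ ^ n * (s - u) ^ n / n.factorial)) *
    exp_split μ₁ μ₂ s u

lemma erlangSumPDF_eq_rho (μ₁ μ₂ s : ℝ) (k ℓ : ℕ) :
    erlangSumPDF μ₁ μ₂ k ℓ s = μ₁ * μ₂ * rho μ₁ μ₂ s (k - 1) (ℓ - 1) := by
  unfold rho erlangSumPDF
  rw [← intervalIntegral.integral_const_mul]
  congr 1
  ext u
  ring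

lemma rho_symm (μ₁ μ₂ s : ℝ) (m n : ℕ) : rho μ₁ μ₂ s m n = rho μ₂ μ₁ s n m := by
  have e := intervalIntegral.integral_comp_sub_left (a := 0) (b := s)
    (fun u => (Real.exp (-(μ₁ * u)) * (μ₁ * u) ^ m / (Nat.factorial m)) *
      (Real.exp (-(μ₂ * (s - u))) * (μ₂ * (s - u)) ^ n / (Nat.factorial n))) s
  rw [sub_self, sub_zero] at e
  unfold rho
  rw [← e]
  congr 1
  ext u
  rw [sub_sub_cancel, mul_comm]

lemma erlangSumPDF_symm (μ₁ μ₂ s : ℝ) (k ℓ : ℕ) :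
    erlangSumPDF μ₁ μ₂ k ℓ s = erlangSumPDF μ₂ μ₁ ℓ k s := by
  rw [erlangSumPDF_eq_rho, erlangSumPDF_eq_rho, rho_symm, mul_comm μ₁]

/-- The kernel `e^{-μ₂ (t - s)}` cancels the factor `e^{-μ₂ s}` of the density, so that the integrand
is a constant multiple of `convPow _ (ℓ - 1)`. -/
lemma integral_exp_mul_erlangSumPDF (μ₁ μ₂ : ℝ) (k ℓ : ℕ) (hl : 1 ≤ ℓ) (v t : ℝ) :
    (∫ s in (t - v)..t, Real.exp (-(μ₂ * (t - s))) * erlangSumPDF μ₁ μ₂ k ℓ s) =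
        μ₁ * rho μ₁ μ₂ t (k - 1) ℓ -
          Real.exp (-(μ₂ * v)) * μ₁ * rho μ₁ μ₂ (t - v) (k - 1) ℓ := by
  obtain ⟨n, rfl⟩ : ∃ n, ℓ = n + 1 := ⟨ℓ - 1, by omega⟩
  set m := k - 1 with hm
  have e1 : ∀ s, Real.exp (-(μ₂ * (t - s))) * Real.exp (-(μ₂ * s)) = Real.exp (-(μ₂ * t)) := by
    intro s
    rw [← Real.exp_add]
    ring_nf
  have e2 : Real.exp (-(μ₂ * v)) * Real.exp (-(μ₂ * (t - v))) = Real.exp (-(μ₂ * t)) := by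
    rw [← Real.exp_add]
    ring_nf
  have e3 : ∀ s, Real.exp (-(μ₂ * (t - s))) * erlangSumPDF μ₁ μ₂ k (n + 1) s =
      (Real.exp (-(μ₂ * t)) * (μ₁ * μ₂ ^ (n + 1) / (m.factorial * n.factorial))) *
        convPow (stageWeight μ₁ μ₂ m) n s := by
    intro s
    rw [erlangSumPDF_eq_rho, rho_eq_convPow, ← e1 s, Nat.add_sub_cancel, ← hm]
    ring
  simp_rw [e3]
  rw [intervalIntegral.integral_const_mul, rho_eq_convPow, rho_eq_convPow, Nat.factorial_succ]
  have i := integral_convPow (continuous_stageWeight μ₁ μ₂ m) n (t - v) t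
  have hn : (n : ℝ) + 1 ≠ 0 := by positivity
  replace i := eq_div_of_mul_eq hn ((mul_comm _ _).trans i)
  rw [i, ← e2]
  generalize Real.exp (-(μ₂ * v)) = a
  generalize Real.exp (-(μ₂ * (t - v))) = b
  push_cast
  field_simp

/-- Lemma 5.6. -/
theorem chi_identities (μ₁ μ₂ : ℝ) (h1 : 0 < μ₁) (h2 : 0 < μ₂) (k ℓ : ℕ)
    (hk : 1 ≤ k) (hl : 1 ≤ ℓ) (v t : ℝ) (hv : 0 ≤ v) (hvt : v ≤ t) :
    (∫ s in (t - v)..t, Real.exp (-(μ₁ * (t - s))) * erlangSumPDF μ₁ μ₂ k ℓ s) =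
        μ₂ * rho μ₁ μ₂ t k (ℓ - 1) -
          Real.exp (-(μ₁ * v)) * μ₂ * rho μ₁ μ₂ (t - v) k (ℓ - 1) ∧
    (∫ s in (t - v)..t, Real.exp (-(μ₂ * (t - s))) * erlangSumPDF μ₁ μ₂ k ℓ s) =
        μ₁ * rho μ₁ μ₂ t (k - 1) ℓ -
          Real.exp (-(μ₂ * v)) * μ₁ * rho μ₁ μ₂ (t - v) (k - 1) ℓ := by
  refine ⟨?_, integral_exp_mul_erlangSumPDF μ₁ μ₂ k ℓ hl v t⟩
  simp_rw [erlangSumPDF_symm μ₁ μ₂, rho_symm μ₁ μ₂]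
  exact integral_exp_mul_erlangSumPDF μ₂ μ₁ ℓ k hk v t
end
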